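/- Let B be a left Noetherian ring and let A be a ring with no zero divisors containing B as a subring, such that A is finitely generated as a left B-module (with B acting by left multiplication). Then every nonzero left ideal I of A has nonzero intersection with B, i.e. there exists x ∈ I ∩ B with x ≠ 0. -/

import Mathlib

/-- Let `B` be a left Noetherian ring and `A` a ring with no zero divisors
containing `B` as a subring, such that `A` is finitely generated as a left `B`-module (with
`B` acting by left multiplication).  Then every nonzero left ideal `I` of `A` has nonzero
intersection with `B`.  (Here `Ideal A = Submodule A A` is a left ideal of the possibly
noncommutative ring `A`.) -/
theorem statement2 {A : Type*} [Ring A] [NoZeroDivisors A] (B : Subring A)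
    [IsNoetherianRing B] [Module.Finite B A] (I : Ideal A) (hI : I ≠ ⊥) :
    ∃ x : A, x ∈ I ∧ x ∈ B ∧ x ≠ 0 := by
  obtain ⟨a, haI, ha⟩ := Submodule.exists_mem_ne_zero_of_ne_bot hI
  by_contra! hcon
  have key : ∀ x : A, x ∈ I → x ∈ B → x = 0 := hcon
  have : IsNoetherian B A := isNoetherian_of_isNoetherianRing_of_finite B A
  let g : A →ₗ[B] A :=
    { toFun := fun x => x * a
      map_add' := fun x y => add_mul x y a
      map_smul' := fun r x => smul_mul_assoc r x a }
  let i : B →ₗ[B] A :=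
    { toFun := fun b => (b : A)
      map_add' := fun _ _ => rfl
      map_smul' := fun _ _ => rfl }
  have hinj : Function.Injective (LinearMap.coprod i g) := by
    rw [injective_iff_map_eq_zero]
    rintro ⟨b, x⟩ h
    have h : x * a + (b : A) = 0 := (add_comm _ _).trans h
    have hb : (b : A) = -(x * a) := eq_neg_of_add_eq_zero_right h
    have hb0 : (b : A) = 0 :=
      key _ (hb ▸ I.neg_mem (I.mul_mem_left x haI)) b.2
    rw [hb0, add_zero] at h
    have hx : x = 0 := (mul_eq_zero.mp h).resolve_right ha
    have hb' : b = 0 := Subtype.ext hb0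
    rw [hx, hb']
    rfl
  have hs : Subsingleton B := IsNoetherian.subsingleton_of_injective hinj
  have h1 : (1 : A) = 0 := congrArg Subtype.val (Subsingleton.elim (1 : B) 0)
  exact ha (by rw [← one_mul a, h1, zero_mul])
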